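/- The cyclic family of holographic entropy inequalities: let n ≥ 2 and let a, b be integers with a > b ≥ 0 and a + b ≤ n. Then for every graph model on n regions, C_n(a) − C_n(b) ≥ S*({1,…,n}); equivalently, Σ_{i=1}^n [ S*({i+1,…,i+a}) − S*({i+1,…,i+b}) ] ≥ S*({1,…,n}), with all indices taken modulo n. -/

import Mathlib

open Classical

/-- A *graph model* on `n` regions: a finite graph with symmetric nonnegative edge
weights `w` (weight `0` meaning "no edge") and a partial coloring of the vertices by
the `n+1` boundary colors; `color v = none` means `v` is a bulk vertex, color
`Fin.castSucc i` represents boundary region `i ∈ {1,…,n}` and color `Fin.last n`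
represents the purifying region `n+1`. -/
structure GraphModel (n : ℕ) where
  V : Type
  [fintypeV : Fintype V]
  w : V → V → ℝ
  symm : ∀ u v, w u v = w v u
  nonneg : ∀ u v, 0 ≤ w u v
  color : V → Option (Fin (n + 1))

attribute [instance] GraphModel.fintypeV

/-- `|C(W)|`: the total weight of the edges with exactly one endpoint in `W`
(each unordered crossing edge `{u,v}` is counted exactly once, via its ordering
with `u ∈ W` and `v ∉ W`). -/
noncomputable def GraphModel.cutWeight {n : ℕ} (G : GraphModel n) (W : Set G.V) : ℝ :=
  ∑ u : G.V, ∑ v : G.V, if u ∈ W ∧ v ∉ W then G.w u v else 0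

/-- `W` is an `I`-cut: `W` contains precisely the boundary vertices whose color lies
in `I ⊆ {1,…,n}`. -/
def GraphModel.IsCut {n : ℕ} (G : GraphModel n) (I : Finset (Fin n)) (W : Set G.V) : Prop :=
  ∀ v c, G.color v = some c → (v ∈ W ↔ ∃ i ∈ I, Fin.castSucc i = c)

/-- The discrete entropy `S*(I)`: the minimal weight of an `I`-cut. -/
noncomputable def GraphModel.entropy {n : ℕ} (G : GraphModel n) (I : Finset (Fin n)) : ℝ :=
  sInf (G.cutWeight '' {W | G.IsCut I W})

/-- The holographic entropy vector of a graph model: the collection of all discrete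
entropies `S*(I)` of nonempty subsets `I ⊆ {1,…,n}`. -/
noncomputable def GraphModel.entropyVector {n : ℕ} (G : GraphModel n)
    (I : {I : Finset (Fin n) // I.Nonempty}) : ℝ :=
  G.entropy I.1

/-- The cyclic window of `a` consecutive regions starting at `i` (indices mod `n`);
summing over all `i` this gives the windows `{i+1,…,i+a}` of the paper. -/
noncomputable def cycWindow (n i a : ℕ) : Finset (Fin n) :=
  Finset.univ.filter fun j => ∃ t < a, (i + t) % n = (j : ℕ)

/-- `C_n(a) = Σ_{i=1}^n S({i+1,…,i+a})`: the cyclic sum of the entropies of all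
windows of `a` consecutive regions. -/
noncomputable def cycC {n : ℕ} (S : Finset (Fin n) → ℝ) (a : ℕ) : ℝ :=
  ∑ i ∈ Finset.range n, S (cycWindow n i a)

/-!
Discrete entropies are submodular and, the remaining colour purifying the state, satisfy
`S*(I) + S*(J) ≤ S*(Iᶜ) + S*(Jᶜ)` for disjoint `I` and `J`. Summed over rotations, the first
inequality says that `m ↦ C_n(m)` is concave, and the second that
`C_n(p) + C_n(q) ≤ C_n(n - p) + C_n(n - q)` for `p + q ≤ n`.

The remaining ingredient is the cyclic inequality on `2k + 1` parties, proved by contraction. If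
`A` is the set of those `i ∈ ℤ/(2k+1)` for which a vertex lies in the cut of `{i, …, i + k}`, keep
the points of `A` from which the walk in steps of `k` returns to `A` after an even number of
steps, and add one bit recording whether `A` is nonempty. Inserting a point into `A ≠ ∅` splits
one gap `d₁ + d₂` of the walk into `d₁` and `d₂`, which changes the parity recorded at exactly
one point.

Grouping the `n` regions into `2b` singletons and one large block, and averaging over rotations,
bounds `C_n(b + 1) - C_n(b)` and `C_n(n - b) - C_n(b)` from below by `S*({1,…,n})`. By concavity
the same bound holds between `b + 1` and `n - b`.
-/

open scoped symmDiff

section HitTime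

variable {α : Type*} {e : Equiv.Perm α} {A : Set α} {p q : α} {m : ℕ}

/-- The first hitting time of `A` by the walk `e p, e² p, …`: the least `m ≥ 1` with `eᵐ p ∈ A`.
It is `0` if the walk never meets `A`. -/
noncomputable def hitTime (e : Equiv.Perm α) (A : Set α) (p : α) : ℕ :=
  sInf {m | 0 < m ∧ (e ^ m) p ∈ A}

theorem hitTime_le (hm : 0 < m) (h : (e ^ m) p ∈ A) : hitTime e A p ≤ m :=
  Nat.sInf_le ⟨hm, h⟩

theorem pow_sub_apply_of_pow_apply_eq {s t : ℕ} (hst : s ≤ t) (h : (e ^ s) p = q) :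
    (e ^ (t - s)) q = (e ^ t) p := by
  rw [← h, ← Equiv.Perm.mul_apply, ← pow_add, Nat.sub_add_cancel hst]

theorem hitTime_eq_one (h : e p ∈ A) : hitTime e A p = 1 :=
  IsLeast.csInf_eq ⟨⟨one_pos, by rwa [pow_one]⟩, fun _ hm => hm.1⟩

theorem hitTime_eq_two (h₁ : e p ∉ A) (h₂ : e (e p) ∈ A) : hitTime e A p = 2 := by
  refine IsLeast.csInf_eq ⟨⟨two_pos, by rwa [pow_two, Equiv.Perm.mul_apply]⟩, ?_⟩
  rintro m ⟨hpos, hm⟩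
  by_contra! hlt
  obtain rfl : m = 1 := by omega
  exact h₁ (by rwa [pow_one] at hm)

section Cycle

variable [Finite α]

theorem hitTime_spec (he : e.IsCycleOn Set.univ) (hA : A.Nonempty) (p : α) :
    0 < hitTime e A p ∧ (e ^ hitTime e A p) p ∈ A := by
  obtain ⟨a, ha⟩ := hA
  obtain ⟨m, hm⟩ := he.exists_pow_eq' Set.finite_univ (Set.mem_univ (e p)) (Set.mem_univ a)
  exact Nat.sInf_mem (s := {m | 0 < m ∧ (e ^ m) p ∈ A})
    ⟨m + 1, m.succ_pos, by rwa [pow_succ, Equiv.Perm.mul_apply, hm]⟩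

theorem pow_hitTime_singleton (he : e.IsCycleOn Set.univ) (q p : α) : (e ^ hitTime e {q} p) p = q :=
  (hitTime_spec he (Set.singleton_nonempty q) p).2

theorem hitTime_insert (he : e.IsCycleOn Set.univ) (hA : A.Nonempty) (q p : α) :
    hitTime e (insert q A) p = min (hitTime e {q} p) (hitTime e A p) := by
  have hunion : {m | 0 < m ∧ (e ^ m) p ∈ insert q A} =
      {m | 0 < m ∧ (e ^ m) p ∈ ({q} : Set α)} ∪ {m | 0 < m ∧ (e ^ m) p ∈ A} := by
    ext m
    exact and_or_left
  rw [hitTime, hunion]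
  exact csInf_union (OrderBot.bddBelow _) ⟨_, hitTime_spec he (Set.singleton_nonempty q) p⟩
    (OrderBot.bddBelow _) ⟨_, hitTime_spec he hA p⟩

theorem hitTime_eq_add_of_lt (he : e.IsCycleOn Set.univ) (hA : A.Nonempty)
    (h : hitTime e {q} p < hitTime e A p) :
    hitTime e A p = hitTime e {q} p + hitTime e A q := by
  have hpq := pow_hitTime_singleton he q p
  have hle : hitTime e A p ≤ hitTime e {q} p + hitTime e A q := by
    refine hitTime_le (Nat.add_pos_right _ (hitTime_spec he hA q).1) ?_
    rw [add_comm, pow_add, Equiv.Perm.mul_apply, hpq]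
    exact (hitTime_spec he hA q).2
  have hge : hitTime e A q ≤ hitTime e A p - hitTime e {q} p := by
    refine hitTime_le (Nat.sub_pos_of_lt h) ?_
    rw [pow_sub_apply_of_pow_apply_eq h.le hpq]
    exact (hitTime_spec he hA p).2
  omega

theorem hitTime_singleton_ne (he : e.IsCycleOn Set.univ) (hA : A.Nonempty) (hq : q ∉ A) (p : α) :
    hitTime e {q} p ≠ hitTime e A p := by
  refine fun h => hq ?_
  rw [← pow_hitTime_singleton he q p, h]
  exact (hitTime_spec he hA p).2

theorem hitTime_lt_hitTime_singleton_self (he : e.IsCycleOn Set.univ) (hA : A.Nonempty)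
    (hq : q ∉ A) : hitTime e A q < hitTime e {q} q := by
  refine (hitTime_singleton_ne he hA hq q).lt_or_gt.resolve_left fun h => ?_
  have hadd := hitTime_eq_add_of_lt he hA h
  have hpos := (hitTime_spec he (Set.singleton_nonempty q) q).1
  omega

theorem eq_of_hitTime_singleton_lt (he : e.IsCycleOn Set.univ) {p' : α} (hp : p ∈ A) (hp' : p' ∈ A)
    (h : hitTime e {q} p < hitTime e A p) (h' : hitTime e {q} p' < hitTime e A p') :
    p = p' := by
  wlog hle : hitTime e {q} p ≤ hitTime e {q} p' generalizing p p'
  · exact (this hp' hp h' h (le_of_not_ge hle)).symm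
  have hwalk : (e ^ (hitTime e {q} p' - hitTime e {q} p)) p' = p := by
    apply (e ^ hitTime e {q} p).injective
    rw [← Equiv.Perm.mul_apply, ← pow_add, Nat.add_sub_cancel' hle,
      pow_hitTime_singleton he, pow_hitTime_singleton he]
  rcases Nat.eq_zero_or_pos (hitTime e {q} p' - hitTime e {q} p) with h0 | hpos
  · rw [h0, pow_zero, Equiv.Perm.one_apply] at hwalk
    exact hwalk.symm
  · have := hitTime_le hpos (hwalk ▸ hp)
    omega

theorem hitTime_singleton_self (he : e.IsCycleOn Set.univ) (q : α) :
    hitTime e {q} q = Nat.card α := by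
  have := Fintype.ofFinite α
  rw [← Finset.coe_univ] at he
  have hleast : IsLeast {m | 0 < m ∧ (e ^ m) q ∈ ({q} : Set α)} (Nat.card α) := by
    simp only [Set.mem_singleton_iff, he.pow_apply_eq (Finset.mem_univ q), Finset.card_univ,
      ← Nat.card_eq_fintype_card]
    exact ⟨⟨Nat.card_pos_iff.2 ⟨⟨q⟩, inferInstance⟩, dvd_rfl⟩,
      fun m hm => Nat.le_of_dvd hm.1 hm.2⟩
  exact hleast.csInf_eq

end Cycle

/-- The points of `A` from which the walk along `e` returns to `A` after an even number of
steps. -/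
def evenReturns (e : Equiv.Perm α) (A : Set α) : Set α :=
  {p | p ∈ A ∧ Even (hitTime e A p)}

/-- The contraction map of the cyclic inequality: `evenReturns e A`, together with the extra bit
`none` recording whether `A` is nonempty. -/
def returnParities (e : Equiv.Perm α) (A : Set α) : Set (Option α) :=
  {o | o.elim A.Nonempty (· ∈ evenReturns e A)}

@[simp]
theorem none_mem_returnParities : none ∈ returnParities e A ↔ A.Nonempty :=
  Iff.rfl

@[simp]
theorem some_mem_returnParities : some p ∈ returnParities e A ↔ p ∈ evenReturns e A :=
  Iff.rfl

@[simp]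
theorem evenReturns_empty (e : Equiv.Perm α) : evenReturns e ∅ = ∅ :=
  Set.eq_empty_of_forall_notMem fun _ hp => hp.1

theorem returnParities_empty (e : Equiv.Perm α) : returnParities e ∅ = ∅ := by
  ext (_ | p) <;> simp

section Cycle

variable [Finite α]

theorem evenReturns_singleton (he : e.IsCycleOn Set.univ) (hodd : Odd (Nat.card α)) (q : α) :
    evenReturns e {q} = ∅ := by
  refine Set.eq_empty_of_forall_notMem ?_
  rintro _ ⟨rfl, heven⟩
  rw [hitTime_singleton_self he] at heven
  exact Nat.not_even_iff_odd.2 hodd heven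

theorem mem_evenReturns_symmDiff_insert (he : e.IsCycleOn Set.univ) (hA : A.Nonempty) (hq : q ∉ A)
    (hp : p ∈ evenReturns e A ∆ evenReturns e (insert q A)) :
    p = q ∧ Even (hitTime e A q) ∨
      p ∈ A ∧ hitTime e {q} p < hitTime e A p ∧ ¬Even (hitTime e A q) := by
  simp only [Set.mem_symmDiff, evenReturns, Set.mem_ofPred_eq, Set.mem_insert_iff,
    hitTime_insert he hA] at hp
  rcases eq_or_ne p q with rfl | hne
  · rw [min_eq_right (hitTime_lt_hitTime_singleton_self he hA hq).le] at hp
    tauto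
  rcases (hitTime_singleton_ne he hA hq p).lt_or_gt with h | h
  · rw [min_eq_left h.le, hitTime_eq_add_of_lt he hA h, Nat.even_add] at hp
    tauto
  · rw [min_eq_right h.le] at hp
    tauto

theorem subsingleton_evenReturns_symmDiff_insert (he : e.IsCycleOn Set.univ) (hA : A.Nonempty)
    (hq : q ∉ A) :
    (evenReturns e A ∆ evenReturns e (insert q A)).Subsingleton := by
  intro p hp p' hp'
  rcases mem_evenReturns_symmDiff_insert he hA hq hp with ⟨rfl, heven⟩ | ⟨hpA, hlt, hodd⟩ <;>
  rcases mem_evenReturns_symmDiff_insert he hA hq hp' with ⟨rfl, heven'⟩ | ⟨hpA', hlt', hodd'⟩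
  · rfl
  · exact absurd heven hodd'
  · exact absurd heven' hodd
  · exact eq_of_hitTime_singleton_lt he hpA hpA' hlt hlt'

theorem subsingleton_returnParities_symmDiff_insert (he : e.IsCycleOn Set.univ)
    (hodd : Odd (Nat.card α)) (hq : q ∉ A) :
    (returnParities e A ∆ returnParities e (insert q A)).Subsingleton := by
  rcases A.eq_empty_or_nonempty with rfl | hA
  · have hnone : ∀ o ∈ returnParities e ∅ ∆ returnParities e (insert q ∅), o = none := by
      rintro (_ | p) hp
      · rfl
      · simp [Set.mem_symmDiff, evenReturns_singleton he hodd] at hp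
    exact fun o ho o' ho' => (hnone o ho).trans (hnone o' ho').symm
  · rintro (_ | p) hp (_ | p') hp'
    · rfl
    · simp [Set.mem_symmDiff, hA] at hp
    · simp [Set.mem_symmDiff, hA] at hp'
    · exact congrArg some (subsingleton_evenReturns_symmDiff_insert he hA hq hp hp')

end Cycle

end HitTime

theorem symmDiff_singleton_of_notMem {α : Type*} {A : Set α} {q : α} (hq : q ∉ A) :
    A ∆ {q} = insert q A := by
  rw [(Set.disjoint_singleton_right.2 hq).symmDiff_eq_sup]
  exact Set.union_singleton

theorem ncard_symmDiff_map_le_of_insert {α β : Type*} [Finite α] [Finite β]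
    {f : Set α → Set β} (hf : ∀ A q, q ∉ A → (f A ∆ f (insert q A)).ncard ≤ 1) (A B : Set α) :
    (f A ∆ f B).ncard ≤ (A ∆ B).ncard := by
  have htoggle : ∀ A q, (f A ∆ f (A ∆ {q})).ncard ≤ 1 := by
    intro A q
    by_cases hq : q ∈ A
    · have h := hf (A \ {q}) q (by simp)
      rwa [Set.insert_sdiff_singleton, Set.insert_eq_of_mem hq, symmDiff_comm,
        ← symmDiff_of_ge (Set.singleton_subset_iff.2 hq)] at h
    · exact symmDiff_singleton_of_notMem hq ▸ hf A q hq
  suffices h : ∀ D : Set α, (f A ∆ f (A ∆ D)).ncard ≤ D.ncard by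
    simpa only [symmDiff_symmDiff_cancel_left] using h (A ∆ B)
  intro D
  induction D, D.toFinite using Set.Finite.induction_on with
  | empty =>
    rw [← Set.bot_eq_empty, symmDiff_bot, symmDiff_self, Set.bot_eq_empty, Set.ncard_empty]
    exact Nat.zero_le _
  | @insert q D hq _ ih =>
    have hstep : A ∆ insert q D = (A ∆ D) ∆ {q} := by
      rw [symmDiff_assoc, symmDiff_singleton_of_notMem hq]
    calc (f A ∆ f (A ∆ insert q D)).ncard
        ≤ (f A ∆ f (A ∆ D) ∪ f (A ∆ D) ∆ f (A ∆ insert q D)).ncard :=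
          Set.ncard_le_ncard (symmDiff_triangle _ _ _)
      _ ≤ (f A ∆ f (A ∆ D)).ncard + (f (A ∆ D) ∆ f (A ∆ insert q D)).ncard :=
          Set.ncard_union_le _ _
      _ ≤ D.ncard + 1 := add_le_add ih (hstep ▸ htoggle (A ∆ D) q)
      _ = (insert q D).ncard := (Set.ncard_insert_of_notMem hq).symm

theorem ncard_returnParities_symmDiff_le {α : Type*} [Finite α] {e : Equiv.Perm α}
    (he : e.IsCycleOn Set.univ) (hodd : Odd (Nat.card α)) (A B : Set α) :
    (returnParities e A ∆ returnParities e B).ncard ≤ (A ∆ B).ncard :=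
  ncard_symmDiff_map_le_of_insert (fun _ _ hq => Set.ncard_le_one_iff_subsingleton.2
    (subsingleton_returnParities_symmDiff_insert he hodd hq)) A B

theorem zmod_val_sub_natCast {N : ℕ} [NeZero N] (y : ZMod N) {s : ℕ} (hs : s ≤ N) :
    (y - s).val = if s ≤ y.val then y.val - s else y.val + N - s := by
  have hlt := ZMod.val_lt y
  have h : y - s = ((y.val + (N - s) : ℕ) : ZMod N) := by
    rw [Nat.cast_add, ZMod.natCast_zmod_val, Nat.cast_sub hs, ZMod.natCast_self]
    ring
  rw [h, ZMod.val_natCast]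
  split_ifs with hle
  · rw [show y.val + (N - s) = y.val - s + N by omega, Nat.add_mod_right,
      Nat.mod_eq_of_lt (by omega)]
  · rw [Nat.mod_eq_of_lt (by omega)]
    omega

section HalfStep

variable (k : ℕ)

theorem isCycleOn_addRight_half :
    (Equiv.addRight (k : ZMod (2 * k + 1))).IsCycleOn Set.univ := by
  refine ⟨(Equiv.bijective _).bijOn_univ, fun p _ q _ => ⟨((-2 * (q - p)).val : ℕ), ?_⟩⟩
  have hN : (2 * k + 1 : ZMod (2 * k + 1)) = 0 := by exact_mod_cast ZMod.natCast_self (2 * k + 1)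
  rw [zpow_natCast, Equiv.nsmul_addRight, Equiv.coe_addRight, nsmul_eq_mul,
    ZMod.natCast_zmod_val]
  linear_combination (p - q) * hN

theorem evenReturns_addRight_half (j : ZMod (2 * k + 1)) :
    evenReturns (Equiv.addRight (k : ZMod (2 * k + 1))) {i | (j - i).val < k + 1} =
      {i | (j - i).val < k} := by
  ext p
  have hone : (j - (p + k)).val = if k ≤ (j - p).val then (j - p).val - k
      else (j - p).val + (2 * k + 1) - k := by
    rw [← sub_sub, zmod_val_sub_natCast _ (by omega)]
  have htwo : (j - (p + k + k)).val = if k ≤ (j - (p + k)).val then (j - (p + k)).val - k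
      else (j - (p + k)).val + (2 * k + 1) - k := by
    rw [← sub_sub, zmod_val_sub_natCast _ (by omega)]
  simp only [evenReturns, Set.mem_ofPred_eq]
  rcases lt_trichotomy (j - p).val k with hlt | heq | hgt
  · rw [if_neg (by omega)] at hone
    rw [if_pos (by omega)] at htwo
    rw [hitTime_eq_two]
    · exact iff_of_true ⟨by omega, even_two⟩ hlt
    · simp only [Equiv.coe_addRight, Set.mem_ofPred_eq]
      omega
    · simp only [Equiv.coe_addRight, Set.mem_ofPred_eq]
      omega
  · rw [if_pos heq.ge] at hone
    rw [hitTime_eq_one]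
    · exact iff_of_false (fun h => Nat.not_even_one h.2) (by omega)
    · simp only [Equiv.coe_addRight, Set.mem_ofPred_eq]
      omega
  · exact iff_of_false (fun h => by omega) (by omega)

end HalfStep

section LabelArc

variable {ι : Type*} [Fintype ι] {N : ℕ}

/-- The elements whose label lies in the cyclic arc `{i, i + 1, …, i + m - 1}` of `ℤ/N`. -/
def labelArc (g : ι → ZMod N) (i : ZMod N) (m : ℕ) : Finset ι :=
  Finset.univ.filter fun c => (g c - i).val < m

theorem mem_labelArc {g : ι → ZMod N} {i : ZMod N} {m : ℕ} {c : ι} :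
    c ∈ labelArc g i m ↔ (g c - i).val < m := by
  simp [labelArc]

variable [NeZero N] (g : ι → ZMod N) (i : ZMod N)

theorem mem_labelArc_add_natCast {s m : ℕ} (hs : s ≤ N) {c : ι} :
    c ∈ labelArc g (i + s) m ↔
      (if s ≤ (g c - i).val then (g c - i).val - s else (g c - i).val + N - s) < m := by
  rw [mem_labelArc, ← sub_sub, zmod_val_sub_natCast _ hs]

theorem disjoint_labelArc_labelArc_add {p q : ℕ} (h : p + q ≤ N) :
    Disjoint (labelArc g i p) (labelArc g (i + p) q) := by
  refine Finset.disjoint_left.2 fun c hc => ?_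
  rw [mem_labelArc] at hc
  rw [mem_labelArc_add_natCast g i (by omega)]
  split_ifs <;> omega

variable [DecidableEq ι]

theorem labelArc_inter_labelArc_add_one {m : ℕ} (hm : m + 1 < N) :
    labelArc g i (m + 1) ∩ labelArc g (i + (1 : ℕ)) (m + 1) = labelArc g (i + (1 : ℕ)) m := by
  ext c
  simp only [Finset.mem_inter, mem_labelArc_add_natCast g i (show 1 ≤ N by omega), mem_labelArc]
  split_ifs <;> omega

theorem labelArc_union_labelArc_add_one (m : ℕ) :
    labelArc g i (m + 1) ∪ labelArc g (i + (1 : ℕ)) (m + 1) = labelArc g i (m + 2) := by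
  ext c
  have hc := ZMod.val_lt (g c - i)
  simp only [Finset.mem_union, mem_labelArc_add_natCast g i (show 1 ≤ N by omega), mem_labelArc]
  split_ifs <;> omega

theorem compl_labelArc {m : ℕ} (hm : m ≤ N) :
    (labelArc g i m)ᶜ = labelArc g (i + m) (N - m) := by
  ext c
  have hc := ZMod.val_lt (g c - i)
  simp only [Finset.mem_compl, mem_labelArc_add_natCast g i hm, mem_labelArc]
  split_ifs <;> omega

end LabelArc

namespace GraphModel

variable {n : ℕ} (G : GraphModel n)

theorem cutWeight_nonneg (W : Set G.V) : 0 ≤ G.cutWeight W :=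
  Finset.sum_nonneg fun u _ => Finset.sum_nonneg fun v _ => by
    split_ifs
    exacts [G.nonneg u v, le_rfl]

theorem cutWeight_inter_add_union_le (W W' : Set G.V) :
    G.cutWeight (W ∩ W') + G.cutWeight (W ∪ W') ≤ G.cutWeight W + G.cutWeight W' := by
  simp only [cutWeight, ← Finset.sum_add_distrib]
  refine Finset.sum_le_sum fun u _ => Finset.sum_le_sum fun v _ => ?_
  have := G.nonneg u v
  by_cases h1 : u ∈ W <;> by_cases h2 : u ∈ W' <;> by_cases h3 : v ∈ W <;>
    by_cases h4 : v ∈ W' <;> simp [h1, h2, h3, h4, this]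

theorem cutWeight_compl (W : Set G.V) : G.cutWeight Wᶜ = G.cutWeight W := by
  rw [cutWeight, Finset.sum_comm]
  simp only [cutWeight, Set.mem_compl_iff, not_not, and_comm, G.symm]

theorem cutWeight_sdiff_add_sdiff_le (W W' : Set G.V) :
    G.cutWeight (W \ W') + G.cutWeight (W' \ W) ≤ G.cutWeight W + G.cutWeight W' := by
  have h := G.cutWeight_inter_add_union_le W W'ᶜ
  rwa [G.cutWeight_compl W', ← G.cutWeight_compl (W ∪ W'ᶜ), Set.compl_union, compl_compl,
    Set.inter_comm Wᶜ] at h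

theorem two_mul_cutWeight (W : Set G.V) :
    2 * G.cutWeight W = ∑ u : G.V, ∑ v : G.V, if u ∈ W ↔ v ∈ W then 0 else G.w u v := by
  rw [two_mul]
  nth_rewrite 2 [← cutWeight_compl]
  simp only [cutWeight, ← Finset.sum_add_distrib]
  refine Finset.sum_congr rfl fun u _ => Finset.sum_congr rfl fun v _ => ?_
  by_cases hu : u ∈ W <;> by_cases hv : v ∈ W <;> simp [hu, hv]

theorem two_mul_sum_cutWeight {ι : Type*} [Fintype ι] (X : ι → Set G.V) :
    2 * ∑ i, G.cutWeight (X i) =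
      ∑ u : G.V, ∑ v : G.V, ({i | u ∈ X i} ∆ {i | v ∈ X i}).ncard * G.w u v := by
  simp only [Finset.mul_sum, two_mul_cutWeight]
  rw [Finset.sum_comm]
  refine Finset.sum_congr rfl fun u _ => ?_
  rw [Finset.sum_comm]
  refine Finset.sum_congr rfl fun v _ => ?_
  have hset : {i | u ∈ X i} ∆ {i | v ∈ X i} =
      (Finset.univ.filter fun i => ¬(u ∈ X i ↔ v ∈ X i) : Finset ι) := by
    ext i
    simp only [Set.mem_symmDiff, Set.mem_ofPred_eq, Finset.coe_filter, Finset.mem_univ, true_and]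
    tauto
  rw [hset, Set.ncard_coe_finset, ← nsmul_eq_mul, ← Finset.sum_const, Finset.sum_filter]
  simp only [ite_not]

theorem sum_cutWeight_le_of_ncard_symmDiff_le {ι κ : Type*} [Fintype ι] [Fintype κ]
    {X : ι → Set G.V} {Y : κ → Set G.V}
    (h : ∀ u v, ({j | u ∈ Y j} ∆ {j | v ∈ Y j}).ncard ≤
      ({i | u ∈ X i} ∆ {i | v ∈ X i}).ncard) :
    ∑ j, G.cutWeight (Y j) ≤ ∑ i, G.cutWeight (X i) := by
  refine le_of_mul_le_mul_left ?_ (two_pos : (0 : ℝ) < 2)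
  rw [two_mul_sum_cutWeight, two_mul_sum_cutWeight]
  exact Finset.sum_le_sum fun u _ => Finset.sum_le_sum fun v _ =>
    mul_le_mul_of_nonneg_right (mod_cast h u v) (G.nonneg u v)

section IsCut

variable {G} {I J : Finset (Fin n)} {W W' : Set G.V}

theorem isCut_iff :
    G.IsCut I W ↔ (∀ v i, G.color v = some (Fin.castSucc i) → (v ∈ W ↔ i ∈ I)) ∧
      ∀ v, G.color v = some (Fin.last n) → v ∉ W := by
  simp only [IsCut, Fin.forall_fin_succ', forall_and, Fin.castSucc_inj, exists_eq_right,
    Fin.castSucc_ne_last, and_false, exists_false, iff_false]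

theorem IsCut.inter (hW : G.IsCut I W) (hW' : G.IsCut J W') : G.IsCut (I ∩ J) (W ∩ W') := by
  rw [isCut_iff] at *
  exact ⟨fun v i hv => by simp [hW.1 v i hv, hW'.1 v i hv], fun v hv => by simp [hW.2 v hv]⟩

theorem IsCut.union (hW : G.IsCut I W) (hW' : G.IsCut J W') : G.IsCut (I ∪ J) (W ∪ W') := by
  rw [isCut_iff] at *
  exact ⟨fun v i hv => by simp [hW.1 v i hv, hW'.1 v i hv],
    fun v hv => by simp [hW.2 v hv, hW'.2 v hv]⟩

theorem IsCut.sdiff (hW : G.IsCut I W) (hW' : G.IsCut J W') : G.IsCut (I \ J) (W \ W') := by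
  rw [isCut_iff] at *
  exact ⟨fun v i hv => by simp [hW.1 v i hv, hW'.1 v i hv], fun v hv => by simp [hW.2 v hv]⟩

end IsCut

theorem exists_isCut (I : Finset (Fin n)) : ∃ W, G.IsCut I W := by
  refine ⟨{v | ∃ i ∈ I, G.color v = some (Fin.castSucc i)}, fun v c hc => ?_⟩
  simp [hc, eq_comm]

theorem exists_isCut_cutWeight_eq_entropy (I : Finset (Fin n)) :
    ∃ W, G.IsCut I W ∧ G.cutWeight W = G.entropy I := by
  have hne : (G.cutWeight '' {W | G.IsCut I W}).Nonempty :=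
    Set.Nonempty.image _ (G.exists_isCut I)
  exact hne.csInf_mem (Set.toFinite _)

theorem entropy_le_cutWeight {I : Finset (Fin n)} {W : Set G.V} (hW : G.IsCut I W) :
    G.entropy I ≤ G.cutWeight W :=
  csInf_le (Set.toFinite _).bddBelow ⟨W, hW, rfl⟩

theorem entropy_nonneg (I : Finset (Fin n)) : 0 ≤ G.entropy I := by
  obtain ⟨W, -, hW⟩ := G.exists_isCut_cutWeight_eq_entropy I
  exact hW ▸ G.cutWeight_nonneg W

theorem entropy_inter_add_union_le (I J : Finset (Fin n)) :
    G.entropy (I ∩ J) + G.entropy (I ∪ J) ≤ G.entropy I + G.entropy J := by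
  obtain ⟨W, hW, hWI⟩ := G.exists_isCut_cutWeight_eq_entropy I
  obtain ⟨W', hW', hWJ⟩ := G.exists_isCut_cutWeight_eq_entropy J
  calc G.entropy (I ∩ J) + G.entropy (I ∪ J)
      ≤ G.cutWeight (W ∩ W') + G.cutWeight (W ∪ W') :=
        add_le_add (G.entropy_le_cutWeight (hW.inter hW')) (G.entropy_le_cutWeight (hW.union hW'))
    _ ≤ G.cutWeight W + G.cutWeight W' := G.cutWeight_inter_add_union_le W W'
    _ = G.entropy I + G.entropy J := by rw [hWI, hWJ]

theorem entropy_sdiff_add_sdiff_le (I J : Finset (Fin n)) :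
    G.entropy (I \ J) + G.entropy (J \ I) ≤ G.entropy I + G.entropy J := by
  obtain ⟨W, hW, hWI⟩ := G.exists_isCut_cutWeight_eq_entropy I
  obtain ⟨W', hW', hWJ⟩ := G.exists_isCut_cutWeight_eq_entropy J
  calc G.entropy (I \ J) + G.entropy (J \ I)
      ≤ G.cutWeight (W \ W') + G.cutWeight (W' \ W) :=
        add_le_add (G.entropy_le_cutWeight (hW.sdiff hW')) (G.entropy_le_cutWeight (hW'.sdiff hW))
    _ ≤ G.cutWeight W + G.cutWeight W' := G.cutWeight_sdiff_add_sdiff_le W W'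
    _ = G.entropy I + G.entropy J := by rw [hWI, hWJ]

theorem entropy_add_le_compl_of_disjoint {I J : Finset (Fin n)} (h : Disjoint I J) :
    G.entropy I + G.entropy J ≤ G.entropy Iᶜ + G.entropy Jᶜ := by
  have hle := G.entropy_sdiff_add_sdiff_le Iᶜ Jᶜ
  rwa [compl_sdiff_compl, compl_sdiff_compl, h.sdiff_eq_left, h.sdiff_eq_right, add_comm] at hle

theorem sum_entropy_le_of_contraction {ι κ : Type*} [Fintype ι] [Fintype κ]
    {I : ι → Finset (Fin n)} {J : κ → Finset (Fin n)} {f : Set ι → Set κ}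
    (hf : ∀ A B, (f A ∆ f B).ncard ≤ (A ∆ B).ncard) (hempty : f ∅ = ∅)
    (hregion : ∀ c, f {i | c ∈ I i} = {j | c ∈ J j}) :
    ∑ j, G.entropy (J j) ≤ ∑ i, G.entropy (I i) := by
  choose X hX hXw using fun i => G.exists_isCut_cutWeight_eq_entropy (I i)
  simp only [isCut_iff] at hX
  let Y : κ → Set G.V := fun j => {v | j ∈ f {i | v ∈ X i}}
  have hY : ∀ j, G.IsCut (J j) (Y j) := by
    refine fun j => isCut_iff.2 ⟨fun v c hv => ?_, fun v hv => ?_⟩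
    · have hv' : {i | v ∈ X i} = {i | c ∈ I i} := Set.ext fun i => (hX i).1 v c hv
      rw [Set.mem_ofPred_eq, hv', hregion, Set.mem_ofPred_eq]
    · have hv' : {i | v ∈ X i} = ∅ := Set.eq_empty_of_forall_notMem fun i => (hX i).2 v hv
      rw [Set.mem_ofPred_eq, hv', hempty]
      exact Set.notMem_empty j
  calc ∑ j, G.entropy (J j)
      ≤ ∑ j, G.cutWeight (Y j) := Finset.sum_le_sum fun j _ => G.entropy_le_cutWeight (hY j)
    _ ≤ ∑ i, G.cutWeight (X i) :=
        G.sum_cutWeight_le_of_ncard_symmDiff_le fun u v => hf {i | u ∈ X i} {i | v ∈ X i}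
    _ = ∑ i, G.entropy (I i) := Finset.sum_congr rfl fun i _ => hXw i

theorem entropy_univ_add_sum_entropy_labelArc_le (k : ℕ) (g : Fin n → ZMod (2 * k + 1)) :
    G.entropy Finset.univ + ∑ i, G.entropy (labelArc g i k) ≤
      ∑ i, G.entropy (labelArc g i (k + 1)) := by
  have hodd : Odd (Nat.card (ZMod (2 * k + 1))) := by
    rw [Nat.card_zmod]
    exact odd_two_mul_add_one k
  have h := G.sum_entropy_le_of_contraction (I := fun i => labelArc g i (k + 1))
    (J := fun o => o.elim Finset.univ fun i => labelArc g i k)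
    (ncard_returnParities_symmDiff_le (isCycleOn_addRight_half k) hodd)
    (returnParities_empty _) fun c => by
      simp only [mem_labelArc]
      ext (_ | i)
      · exact iff_of_true ⟨g c, by simp⟩ (Finset.mem_univ c)
      · exact (Set.ext_iff.1 (evenReturns_addRight_half k (g c)) i).trans mem_labelArc.symm
  rwa [Fintype.sum_option] at h

end GraphModel


section CyclicSums

theorem sum_zmod_val {M : Type*} [AddCommMonoid M] {n : ℕ} [NeZero n] (f : ℕ → M) :
    ∑ x : ZMod n, f x.val = ∑ i ∈ Finset.range n, f i := by
  cases n with
  | zero => exact absurd rfl (NeZero.ne 0)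
  | succ n => exact Fin.sum_univ_eq_sum_range f (n + 1)

variable {n : ℕ}

/-- The cyclic window of `m` regions starting at `x ∈ ℤ/n`. -/
def cyclicArc (x : ZMod n) (m : ℕ) : Finset (Fin n) :=
  labelArc (fun c : Fin n => ((c : ℕ) : ZMod n)) x m

/-- The grouping of the `n` regions, read cyclically from `s`, into `L` singletons followed by one
block holding all the remaining regions. -/
def cyclicBlock (L : ℕ) (s : ZMod n) (c : Fin n) : ZMod (L + 1) :=
  (min (((c : ℕ) : ZMod n) - s).val L : ℕ)

variable [NeZero n]

theorem cycWindow_eq_cyclicArc (i : ℕ) {m : ℕ} (hm : m ≤ n) :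
    cycWindow n i m = cyclicArc (i : ZMod n) m := by
  ext c
  simp only [cycWindow, cyclicArc, mem_labelArc, Finset.mem_filter, Finset.mem_univ, true_and]
  constructor
  · rintro ⟨t, ht, h⟩
    have hsub : ((c : ℕ) : ZMod n) - i = t := by
      rw [← h, ZMod.natCast_mod, Nat.cast_add, add_sub_cancel_left]
    rwa [hsub, ZMod.val_cast_of_lt (by omega)]
  · refine fun h => ⟨_, h, ?_⟩
    have hadd : ((i + (((c : ℕ) : ZMod n) - i).val : ℕ) : ZMod n) = (c : ℕ) := by
      rw [Nat.cast_add, ZMod.natCast_zmod_val, add_sub_cancel]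
    rwa [ZMod.natCast_eq_natCast_iff', Nat.mod_eq_of_lt c.2] at hadd

theorem cycC_eq_sum_cyclicArc (S : Finset (Fin n) → ℝ) {m : ℕ} (hm : m ≤ n) (y : ZMod n) :
    cycC S m = ∑ x, S (cyclicArc (x + y) m) :=
  calc cycC S m
      = ∑ x : ZMod n, S (cycWindow n x.val m) := (sum_zmod_val fun i => S (cycWindow n i m)).symm
    _ = ∑ x : ZMod n, S (cyclicArc x m) := by
        simp only [cycWindow_eq_cyclicArc _ hm, ZMod.natCast_zmod_val]
    _ = ∑ x, S (cyclicArc (x + y) m) :=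
        (Equiv.sum_comp (Equiv.addRight y) fun x => S (cyclicArc x m)).symm

theorem labelArc_cyclicBlock {L : ℕ} (hL : L < n) (s : ZMod n) (i : ZMod (L + 1))
    (m : ℕ) :
    labelArc (cyclicBlock L s) i m =
      cyclicArc (s + (i.val : ZMod n)) (if i.val + m ≤ L then m else n + m - (L + 1)) := by
  ext c
  have hc := ZMod.val_lt (((c : ℕ) : ZMod n) - s)
  have hi := ZMod.val_lt i
  rw [cyclicArc, mem_labelArc_add_natCast _ s (by omega), mem_labelArc, cyclicBlock]
  nth_rewrite 1 [← ZMod.natCast_zmod_val i]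
  rw [zmod_val_sub_natCast _ hi.le, ZMod.val_cast_of_lt (by omega)]
  split_ifs <;> omega

theorem sum_sum_labelArc_cyclicBlock (S : Finset (Fin n) → ℝ) {L m : ℕ} (hL : L < n)
    (hm : m ≤ L + 1) :
    ∑ s : ZMod n, ∑ i, S (labelArc (cyclicBlock L s) i m) =
      (L + 1 - m : ℕ) * cycC S m + m * cycC S (n + m - (L + 1)) := by
  have hshift : ∀ i : ZMod (L + 1), ∑ s : ZMod n, S (labelArc (cyclicBlock L s) i m) =
      cycC S (if i.val + m ≤ L then m else n + m - (L + 1)) := by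
    intro i
    simp only [labelArc_cyclicBlock hL]
    refine (cycC_eq_sum_cyclicArc S ?_ _).symm
    split_ifs <;> omega
  rw [Finset.sum_comm]
  simp only [hshift]
  rw [sum_zmod_val fun i => cycC S (if i + m ≤ L then m else n + m - (L + 1)),
    show L + 1 = L + 1 - m + m by omega, Finset.sum_range_add]
  congr 1
  · rw [Finset.sum_congr rfl fun i hi => by
      rw [if_pos (by have := Finset.mem_range.1 hi; omega)]]
    simp
  · rw [Finset.sum_congr rfl fun i _ => by rw [if_neg (by omega)]]
    simp

end CyclicSums

section Concave

variable {M : Type*} [AddCommGroup M] [LinearOrder M] [IsOrderedAddMonoid M] {D : ℕ → M}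
  {n i a j : ℕ}

theorem sub_le_nsmul_of_antitoneOn_sub
    (hD : AntitoneOn (fun m => D (m + 1) - D m) (Set.Iio n)) (hij : i ≤ j) (hj : j ≤ n) :
    D j - D i ≤ (j - i) • (D (i + 1) - D i) := by
  rw [← Finset.sum_Ico_sub D hij, ← Nat.card_Ico]
  refine Finset.sum_le_card_nsmul _ _ _ fun m hm => ?_
  rw [Finset.mem_Ico] at hm
  exact hD (show i < n by omega) (show m < n by omega) hm.1

theorem min_le_of_antitoneOn_sub
    (hD : AntitoneOn (fun m => D (m + 1) - D m) (Set.Iio n)) (hia : i ≤ a) (haj : a ≤ j)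
    (hj : j ≤ n) : min (D i) (D j) ≤ D a := by
  rcases haj.eq_or_lt with rfl | hlt
  · exact min_le_right _ _
  rcases le_total 0 (D (a + 1) - D a) with h | h
  · refine min_le_of_left_le (sub_nonneg.1 ?_)
    rw [← Finset.sum_Ico_sub D hia]
    refine Finset.sum_nonneg fun m hm => h.trans ?_
    rw [Finset.mem_Ico] at hm
    exact hD (show m < n by omega) (show a < n by omega) hm.2.le
  · exact min_le_of_right_le (sub_nonpos.1
      ((sub_le_nsmul_of_antitoneOn_sub hD haj hj).trans (nsmul_nonpos h _)))

end Concave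

namespace GraphModel

variable {n : ℕ} [NeZero n] (G : GraphModel n)

theorem cycC_entropy_add_cycC_entropy_le {m : ℕ} (hm : m + 1 < n) :
    cycC G.entropy m + cycC G.entropy (m + 2) ≤ 2 * cycC G.entropy (m + 1) := by
  calc cycC G.entropy m + cycC G.entropy (m + 2)
      = ∑ x : ZMod n, (G.entropy (cyclicArc (x + (1 : ℕ)) m) +
          G.entropy (cyclicArc (x + 0) (m + 2))) := by
        rw [Finset.sum_add_distrib, ← cycC_eq_sum_cyclicArc _ (by omega),
          ← cycC_eq_sum_cyclicArc _ (by omega)]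
    _ ≤ ∑ x : ZMod n, (G.entropy (cyclicArc (x + 0) (m + 1)) +
          G.entropy (cyclicArc (x + (1 : ℕ)) (m + 1))) := by
        refine Finset.sum_le_sum fun x _ => ?_
        simpa only [add_zero, cyclicArc, labelArc_inter_labelArc_add_one _ x hm,
          labelArc_union_labelArc_add_one] using
          G.entropy_inter_add_union_le (cyclicArc x (m + 1)) (cyclicArc (x + (1 : ℕ)) (m + 1))
    _ = 2 * cycC G.entropy (m + 1) := by
        rw [Finset.sum_add_distrib, ← cycC_eq_sum_cyclicArc _ hm.le,
          ← cycC_eq_sum_cyclicArc _ hm.le, two_mul]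

theorem antitoneOn_cycC_entropy_sub :
    AntitoneOn (fun m => cycC G.entropy (m + 1) - cycC G.entropy m) (Set.Iio n) := by
  refine antitoneOn_of_add_one_le Set.ordConnected_Iio fun m _ _ hm => ?_
  linarith [G.cycC_entropy_add_cycC_entropy_le hm]

theorem cycC_entropy_add_le_compl {p q : ℕ} (h : p + q ≤ n) :
    cycC G.entropy p + cycC G.entropy q ≤ cycC G.entropy (n - p) + cycC G.entropy (n - q) := by
  calc cycC G.entropy p + cycC G.entropy q
      = ∑ x : ZMod n, (G.entropy (cyclicArc (x + 0) p) + G.entropy (cyclicArc (x + p) q)) := by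
        rw [Finset.sum_add_distrib, ← cycC_eq_sum_cyclicArc _ (by omega),
          ← cycC_eq_sum_cyclicArc _ (by omega)]
    _ ≤ ∑ x : ZMod n, (G.entropy (cyclicArc (x + p) (n - p)) +
          G.entropy (cyclicArc (x + (p + q)) (n - q))) := by
        refine Finset.sum_le_sum fun x _ => ?_
        rw [add_zero, ← add_assoc]
        simpa only [cyclicArc, compl_labelArc _ x (show p ≤ n by omega),
          compl_labelArc _ (x + (p : ZMod n)) (show q ≤ n by omega)] using
          G.entropy_add_le_compl_of_disjoint
            (disjoint_labelArc_labelArc_add (fun c : Fin n => ((c : ℕ) : ZMod n)) x h)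
    _ = cycC G.entropy (n - p) + cycC G.entropy (n - q) := by
        rw [Finset.sum_add_distrib, ← cycC_eq_sum_cyclicArc _ (Nat.sub_le n p),
          ← cycC_eq_sum_cyclicArc _ (Nat.sub_le n q)]

theorem cycC_entropy_block_le {k : ℕ} (hk : 2 * k + 1 ≤ n) :
    n * G.entropy Finset.univ + ((k + 1) * cycC G.entropy k + k * cycC G.entropy (n - (k + 1))) ≤
      k * cycC G.entropy (k + 1) + (k + 1) * cycC G.entropy (n - k) := by
  have hsum := Finset.sum_le_sum fun s (_ : s ∈ (Finset.univ : Finset (ZMod n))) =>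
    G.entropy_univ_add_sum_entropy_labelArc_le k (cyclicBlock (2 * k) s)
  rw [Finset.sum_add_distrib, sum_sum_labelArc_cyclicBlock _ hk (by omega),
    sum_sum_labelArc_cyclicBlock _ hk (by omega), Finset.sum_const, Finset.card_univ, ZMod.card,
    nsmul_eq_mul, show 2 * k + 1 - k = k + 1 by omega, show 2 * k + 1 - (k + 1) = k by omega,
    show n + k - (2 * k + 1) = n - (k + 1) by omega,
    show n + (k + 1) - (2 * k + 1) = n - k by omega] at hsum
  exact_mod_cast hsum

theorem entropy_univ_le_cycC_entropy_compl_sub {k : ℕ} (hk : 2 * k + 1 ≤ n) :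
    G.entropy Finset.univ ≤ cycC G.entropy (n - k) - cycC G.entropy k := by
  have hblock := G.cycC_entropy_block_le hk
  have hcompl := G.cycC_entropy_add_le_compl (show k + (k + 1) ≤ n by omega)
  refine le_of_mul_le_mul_left ?_ (show (0 : ℝ) < 2 * k + 1 by positivity)
  calc (2 * k + 1) * G.entropy Finset.univ
      ≤ n * G.entropy Finset.univ :=
        mul_le_mul_of_nonneg_right (mod_cast hk) (G.entropy_nonneg _)
    _ ≤ (2 * k + 1) * (cycC G.entropy (n - k) - cycC G.entropy k) := by
        linarith [mul_le_mul_of_nonneg_left hcompl k.cast_nonneg]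

theorem entropy_univ_le_cycC_entropy_succ_sub {k : ℕ} (hk : 2 * k + 1 ≤ n) :
    G.entropy Finset.univ ≤ cycC G.entropy (k + 1) - cycC G.entropy k := by
  have hblock := G.cycC_entropy_block_le hk
  have hD := G.antitoneOn_cycC_entropy_sub
  have hslope : cycC G.entropy (n - k) - cycC G.entropy (n - (k + 1)) ≤
      cycC G.entropy (k + 1) - cycC G.entropy k := by
    have h := hD (show k < n by omega) (show n - (k + 1) < n by omega) (by omega)
    rwa [show n - k = n - (k + 1) + 1 by omega]
  have hchord : cycC G.entropy (n - k) - cycC G.entropy k ≤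
      (n - 2 * k) * (cycC G.entropy (k + 1) - cycC G.entropy k) := by
    have h := sub_le_nsmul_of_antitoneOn_sub hD (show k ≤ n - k by omega) (Nat.sub_le n k)
    rw [nsmul_eq_mul, show n - k - k = n - 2 * k by omega, Nat.cast_sub (by omega)] at h
    exact_mod_cast h
  refine le_of_mul_le_mul_left ?_ (show (0 : ℝ) < n by exact_mod_cast (by omega : 0 < n))
  linarith [mul_le_mul_of_nonneg_left hslope k.cast_nonneg]

end GraphModel

/-- The cyclic family of holographic entropy inequalities: for
`n ≥ 2`, `a > b ≥ 0` and `a + b ≤ n`, every graph model on `n` regions satisfies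
`C_n(a) − C_n(b) ≥ S*({1,…,n})`. -/
theorem stmt12 (n : ℕ) (hn : 2 ≤ n) (a b : ℕ) (hab : b < a) (hsum : a + b ≤ n)
    (G : GraphModel n) :
    cycC G.entropy a - cycC G.entropy b ≥ G.entropy Finset.univ := by
  have : NeZero n := ⟨by omega⟩
  have hb : 2 * b + 1 ≤ n := by omega
  have hshort := G.entropy_univ_le_cycC_entropy_succ_sub hb
  have hlong := G.entropy_univ_le_cycC_entropy_compl_sub hb
  have hmin : min (cycC G.entropy (b + 1)) (cycC G.entropy (n - b)) ≤ cycC G.entropy a :=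
    min_le_of_antitoneOn_sub G.antitoneOn_cycC_entropy_sub hab (by omega) (Nat.sub_le n b)
  rcases min_le_iff.1 hmin with h | h <;> linarith
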